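/- arXiv:2211.01187 — 4 statements merged into one kernel-verified Lean document; each statement's English description precedes it below -/
import Mathlib

section
/- The map t ↦ L_t(0) is continuous on [0,T], where L_t(0) is the value of the operator L_t at the zero random variable. -/
open MeasureTheory Filter Topology

/-- The operator `L_t(η) := inf {x ≥ 0 : 𝐄[ℓ(·, t, x+η)] ≥ 0}`. -/
noncomputable def LopT {Ω : Type*} [MeasurableSpace Ω] (P : Measure Ω)
    (ℓ : Ω → ℝ → ℝ → ℝ) (t : ℝ) (η : Ω → ℝ) : ℝ :=
  sInf {x : ℝ | 0 ≤ x ∧ 0 ≤ ∫ ω, ℓ ω t (x + η ω) ∂P}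

/-- The map `t ↦ L_t(0)` is continuous on `[0, T]`. -/
theorem stmt4 {Ω : Type*} [MeasurableSpace Ω] (P : Measure Ω) [IsProbabilityMeasure P]
    (T : ℝ) (hT : 0 < T)
    (ℓ : Ω → ℝ → ℝ → ℝ)
    (hmeas : Measurable (fun p : Ω × ℝ × ℝ => ℓ p.1 p.2.1 p.2.2))
    (hcont : ∀ ω, ContinuousOn (fun p : ℝ × ℝ => ℓ ω p.1 p.2) (Set.Icc 0 T ×ˢ Set.univ))
    (hmono : ∀ ω, ∀ t ∈ Set.Icc (0 : ℝ) T, StrictMono (fun y => ℓ ω t y))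
    (L₀ : ℝ) (hL₀ : 0 < L₀)
    (hgrowth : ∀ ω, ∀ t ∈ Set.Icc (0 : ℝ) T, ∀ y, |ℓ ω t y| ≤ L₀ * (1 + |y|))
    (hlim : ∀ t ∈ Set.Icc (0 : ℝ) T, ∃ l : EReal, 0 < l ∧
      Tendsto (fun x : ℝ => ((∫ ω, ℓ ω t x ∂P : ℝ) : EReal)) atTop (𝓝 l)) :
    ContinuousOn (fun t => LopT P ℓ t (fun _ => 0)) (Set.Icc 0 T) := by
  have hint : ∀ t ∈ Set.Icc (0 : ℝ) T, ∀ x, Integrable (fun ω => ℓ ω t x) P := by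
    intro t ht x
    refine (integrable_const (L₀ * (1 + |x|))).mono' ?_ (ae_of_all _ fun ω => hgrowth ω t ht x)
    exact (hmeas.comp (by fun_prop : Measurable fun ω : Ω => (ω, t, x))).aestronglyMeasurable
  have hg : ∀ t ∈ Set.Icc (0 : ℝ) T, StrictMono (fun x => ∫ ω, ℓ ω t x ∂P) := by
    intro t ht x y hxy
    have h1 : 0 < ∫ ω, (ℓ ω t y - ℓ ω t x) ∂P := by
      rw [integral_pos_iff_support_of_nonneg
        (fun ω => sub_nonneg.2 (hmono ω t ht hxy).le) ((hint t ht y).sub (hint t ht x))]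
      have : Function.support (fun ω => ℓ ω t y - ℓ ω t x) = Set.univ :=
        Set.eq_univ_of_forall fun ω => (sub_pos.2 (hmono ω t ht hxy)).ne'
      rw [this]
      simp
    rw [integral_sub (hint t ht y) (hint t ht x)] at h1
    exact sub_pos.1 h1
  have hc : ∀ x, ContinuousOn (fun t => ∫ ω, ℓ ω t x ∂P) (Set.Icc 0 T) := by
    intro x
    refine continuousOn_of_dominated (bound := fun _ => L₀ * (1 + |x|))
      (fun t ht => (hint t ht x).aestronglyMeasurable)
      (fun t ht => ae_of_all _ fun ω => hgrowth ω t ht x) (integrable_const _)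
      (ae_of_all _ fun ω => ?_)
    exact (hcont ω).comp (f := fun t : ℝ => (t, x)) (by fun_prop) (fun t ht => ⟨ht, trivial⟩)
  have hne : ∀ t ∈ Set.Icc (0 : ℝ) T,
      {x : ℝ | 0 ≤ x ∧ 0 ≤ ∫ ω, ℓ ω t (x + 0) ∂P}.Nonempty := by
    intro t ht
    obtain ⟨l, hl, hlt⟩ := hlim t ht
    obtain ⟨x, hx, hx0⟩ := ((hlt.eventually (lt_mem_nhds hl)).and (eventually_ge_atTop 0)).exists
    refine ⟨x, hx0, ?_⟩
    rw [add_zero]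
    exact_mod_cast hx.le
  have hbdd : ∀ t, BddBelow {x : ℝ | 0 ≤ x ∧ 0 ≤ ∫ ω, ℓ ω t (x + 0) ∂P} :=
    fun t => ⟨0, fun x hx => hx.1⟩
  intro t ht
  refine tendsto_order.2 ⟨fun b hb => ?_, fun b hb => ?_⟩
  · simp only [LopT] at hb ⊢
    rcases lt_or_ge b 0 with h0 | h0
    · exact Eventually.of_forall fun s => h0.trans_le (Real.sInf_nonneg fun x hx => hx.1)
    · obtain ⟨c, hbc, hca⟩ := exists_between hb
      have hneg : ∫ ω, ℓ ω t c ∂P < 0 := by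
        by_contra! h
        exact absurd (csInf_le (hbdd t) ⟨h0.trans hbc.le, by simpa using h⟩) (not_le.2 hca)
      filter_upwards [(hc c t ht).eventually (gt_mem_nhds hneg), self_mem_nhdsWithin] with s hs hsT
      refine hbc.trans_le (le_csInf (hne s hsT) fun x hx => ?_)
      have hx2 := hx.2
      rw [add_zero] at hx2
      exact ((hg s hsT).lt_iff_lt.1 (hs.trans_le hx2)).le
  · simp only [LopT] at hb ⊢
    obtain ⟨c, hac, hcb⟩ := exists_between hb
    obtain ⟨x, ⟨hx0, hx⟩, hxc⟩ := exists_lt_of_csInf_lt (hne t ht) hac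
    rw [add_zero] at hx
    have hpos : 0 < ∫ ω, ℓ ω t c ∂P := hx.trans_lt (hg t ht hxc)
    filter_upwards [(hc c t ht).eventually (lt_mem_nhds hpos)] with s hs
    exact (csInf_le (hbdd s) ⟨hx0.trans hxc.le, by simpa using hs.le⟩).trans_lt hcb
end

section
/- If (y_t)_{t∈[0,T]} is a jointly measurable real-valued stochastic process whose sample paths are continuous and which satisfies 𝐄[sup_{t∈[0,T]} |y_t|] < ∞, then the map t ↦ L_t(y_t) is continuous on [0,T]. -/
open MeasureTheory Filter Topology

theorem aux_sInf (s : Set ℝ) (F : ℝ → ℝ → ℝ) (C : ℝ) (hC : 0 < C)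
    (hF : ∀ x, ContinuousOn (fun t => F t x) s)
    (hm : ∀ t ∈ s, ∀ a b, a ≤ b → C * (b - a) ≤ F t b - F t a) :
    ContinuousOn (fun t => sInf {x : ℝ | 0 ≤ x ∧ 0 ≤ F t x}) s := by
  have hbdd : ∀ t, BddBelow {x : ℝ | 0 ≤ x ∧ 0 ≤ F t x} := fun t => ⟨0, fun x hx => hx.1⟩
  have hne : ∀ t ∈ s, {x : ℝ | 0 ≤ x ∧ 0 ≤ F t x}.Nonempty := by
    intro t ht
    have h0 : 0 ≤ |F t 0| / C := by positivity
    refine ⟨|F t 0| / C, h0, ?_⟩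
    have h := hm t ht 0 _ h0
    have h2 : C * (|F t 0| / C - 0) = |F t 0| := by field_simp; ring
    have := neg_abs_le (F t 0)
    linarith
  intro t₀ ht₀
  refine tendsto_order.2 ⟨fun a ha => ?_, fun b hb => ?_⟩
  · rcases lt_or_ge a 0 with h | h
    · exact Eventually.of_forall fun t => h.trans_le (Real.sInf_nonneg fun x hx => hx.1)
    · obtain ⟨a', h1, h2⟩ := exists_between ha
      have h3 : F t₀ a' < 0 := by
        by_contra h4
        push Not at h4
        exact absurd (csInf_le (hbdd t₀) ⟨by linarith, h4⟩) (not_le.2 h2)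
      filter_upwards [(hF a' t₀ ht₀).eventually_lt_const h3, self_mem_nhdsWithin] with t h5 hts
      refine h1.trans_le (le_csInf (hne t hts) fun x hx => ?_)
      by_contra h6
      push Not at h6
      have := hm t hts x a' h6.le
      have h7 : 0 < C * (a' - x) := mul_pos hC (by linarith)
      linarith [hx.2]
  · obtain ⟨x, hx, hxb⟩ := exists_lt_of_csInf_lt (hne t₀ ht₀) hb
    obtain ⟨b', h1, h2⟩ := exists_between hxb
    have h3 : 0 < F t₀ b' := by
      have := hm t₀ ht₀ x b' h1.le
      have h7 : 0 < C * (b' - x) := mul_pos hC (by linarith)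
      linarith [hx.2]
    filter_upwards [(hF b' t₀ ht₀).eventually_const_lt h3] with t h5
    exact (csInf_le (hbdd t) ⟨by linarith [hx.1], h5.le⟩).trans_lt h2

/-- If `(y_t)` is a jointly measurable process with continuous sample paths and
`𝐄[sup_{t ∈ [0,T]} |y_t|] < ∞`, then `t ↦ L_t(y_t)` is continuous on `[0, T]`. -/
theorem stmt5 {Ω : Type*} [MeasurableSpace Ω] (P : Measure Ω) [IsProbabilityMeasure P]
    (T : ℝ) (hT : 0 < T)
    (ℓ : Ω → ℝ → ℝ → ℝ)
    (hmeas : Measurable (fun p : Ω × ℝ × ℝ => ℓ p.1 p.2.1 p.2.2))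
    (hcont : ∀ ω, ContinuousOn (fun p : ℝ × ℝ => ℓ ω p.1 p.2) (Set.Icc 0 T ×ˢ Set.univ))
    (hmono : ∀ ω, ∀ t ∈ Set.Icc (0 : ℝ) T, StrictMono (fun y => ℓ ω t y))
    (L₀ : ℝ) (hL₀ : 0 < L₀)
    (hgrowth : ∀ ω, ∀ t ∈ Set.Icc (0 : ℝ) T, ∀ y, |ℓ ω t y| ≤ L₀ * (1 + |y|))
    (hlim : ∀ t ∈ Set.Icc (0 : ℝ) T, ∃ l : EReal, 0 < l ∧
      Tendsto (fun x : ℝ => ((∫ ω, ℓ ω t x ∂P : ℝ) : EReal)) atTop (𝓝 l))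
    (κ C : ℝ) (hκ : 1 < κ) (hC : 0 < C)
    (hbilip : ∀ ω, ∀ t ∈ Set.Icc (0 : ℝ) T, ∀ y₁ y₂,
      C * |y₁ - y₂| ≤ |ℓ ω t y₁ - ℓ ω t y₂| ∧ |ℓ ω t y₁ - ℓ ω t y₂| ≤ κ * C * |y₁ - y₂|)
    (y : ℝ → Ω → ℝ)
    (hymeas : Measurable (fun q : ℝ × Ω => y q.1 q.2))
    (hypath : ∀ ω, ContinuousOn (fun t => y t ω) (Set.Icc 0 T))
    (hysup : Integrable (fun ω => ⨆ t : Set.Icc (0 : ℝ) T, |y t ω|) P) :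
    ContinuousOn (fun t => LopT P ℓ t (y t)) (Set.Icc 0 T) := by
  have hle : ∀ ω, ∀ t ∈ Set.Icc (0 : ℝ) T, |y t ω| ≤ ⨆ t : Set.Icc (0 : ℝ) T, |y t ω| := by
    intro ω t ht
    have hb : BddAbove (Set.range fun t : Set.Icc (0 : ℝ) T => |y t ω|) := by
      have := (isCompact_Icc (a := (0 : ℝ)) (b := T)).bddAbove_image (hypath ω).abs
      rw [Set.image_eq_range] at this
      exact this
    exact le_ciSup hb ⟨t, ht⟩
  have hbd : ∀ x ω, ∀ t ∈ Set.Icc (0 : ℝ) T, ‖ℓ ω t (x + y t ω)‖ ≤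
      L₀ * (1 + |x| + ⨆ t : Set.Icc (0 : ℝ) T, |y t ω|) := by
    intro x ω t ht
    refine (hgrowth ω t ht _).trans ?_
    have h1 := hle ω t ht
    have h2 := abs_add_le x (y t ω)
    exact mul_le_mul_of_nonneg_left (by linarith) hL₀.le
  have hbi : ∀ x : ℝ, Integrable
      (fun ω => L₀ * (1 + |x| + ⨆ t : Set.Icc (0 : ℝ) T, |y t ω|)) P := fun x =>
    ((integrable_const _).add hysup).const_mul _
  have hms : ∀ t x, AEStronglyMeasurable (fun ω => ℓ ω t (x + y t ω)) P := by
    intro t x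
    have h1 : Measurable (fun ω => y t ω) := hymeas.comp (measurable_const.prodMk measurable_id)
    exact (hmeas.comp (measurable_id.prodMk
      (measurable_const.prodMk (measurable_const.add h1)))).aestronglyMeasurable
  have hint : ∀ x, ∀ t ∈ Set.Icc (0 : ℝ) T, Integrable (fun ω => ℓ ω t (x + y t ω)) P :=
    fun x t ht => (hbi x).mono' (hms t x) (Eventually.of_forall fun ω => hbd x ω t ht)
  refine aux_sInf (Set.Icc 0 T) (fun t x => ∫ ω, ℓ ω t (x + y t ω) ∂P) C hC ?_ ?_
  · intro x
    refine continuousOn_of_dominated (fun t _ => hms t x)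
      (fun t ht => Eventually.of_forall fun ω => hbd x ω t ht) (hbi x)
      (Eventually.of_forall fun ω => ?_)
    exact (hcont ω).comp (continuousOn_id.prodMk (continuousOn_const.add (hypath ω)))
      (fun t ht => ⟨ht, Set.mem_univ _⟩)
  · intro t ht a b hab
    rw [← integral_sub (hint b t ht) (hint a t ht)]
    have h : ∫ _ω, C * (b - a) ∂P = C * (b - a) := by simp
    rw [← h]
    refine integral_mono (integrable_const _) ((hint b t ht).sub (hint a t ht)) fun ω => ?_
    have h1 := (hbilip ω t ht (b + y t ω) (a + y t ω)).1
    have h2 : ℓ ω t (a + y t ω) ≤ ℓ ω t (b + y t ω) := (hmono ω t ht).monotone (by linarith)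
    rw [abs_of_nonneg (sub_nonneg.2 h2), abs_of_nonneg (by linarith)] at h1
    simp only
    linarith
end

section
/- If (y¹_t)_{t∈[0,T]} and (y²_t)_{t∈[0,T]} are jointly measurable real-valued stochastic processes with continuous sample paths satisfying 𝐄[sup_{t∈[0,T]} |yⁱ_t|] < ∞ for i = 1,2, then for every t ∈ [0,T]: |sup_{s∈[t,T]} L_s(y¹_s) − sup_{s∈[t,T]} L_s(y²_s)| ≤ κ sup_{s∈[t,T]} 𝐄[|y¹_s − y²_s|]. -/
open MeasureTheory Filter Topology

section helpers
variable {Ω : Type*} [MeasurableSpace Ω] (P : Measure Ω) [IsProbabilityMeasure P]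
  (ℓ : Ω → ℝ → ℝ → ℝ) (s L₀ κ C : ℝ)

lemma aux_int
    (hmeas : Measurable (fun p : Ω × ℝ × ℝ => ℓ p.1 p.2.1 p.2.2))
    (hgrowth : ∀ ω, ∀ y, |ℓ ω s y| ≤ L₀ * (1 + |y|))
    (η : Ω → ℝ) (hm : Measurable η) (hη : Integrable η P) :
    Integrable (fun ω => ℓ ω s (η ω)) P := by
  refine Integrable.mono' (g := fun ω => L₀ * (1 + |η ω|)) ?_ ?_ ?_
  · exact ((integrable_const (1:ℝ)).add hη.abs).const_mul L₀
  · have : Measurable (fun ω => ℓ ω s (η ω)) :=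
      hmeas.comp (measurable_id.prodMk (measurable_const.prodMk hm))
    exact this.aestronglyMeasurable
  · exact ae_of_all _ fun ω => hgrowth ω (η ω)

lemma aux_incr
    (hmono : ∀ ω, StrictMono (fun y => ℓ ω s y))
    (hbilip : ∀ ω, ∀ y₁ y₂, C * |y₁ - y₂| ≤ |ℓ ω s y₁ - ℓ ω s y₂|)
    (ω : Ω) (y d : ℝ) (hd : 0 ≤ d) : ℓ ω s y + C * d ≤ ℓ ω s (y + d) := by
  have h1 := hbilip ω (y + d) y
  have h2 : ℓ ω s y ≤ ℓ ω s (y + d) := (hmono ω).monotone (by linarith)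
  rw [abs_of_nonneg (sub_nonneg.2 h2), add_sub_cancel_left, abs_of_nonneg hd] at h1
  linarith

lemma aux_bound
    (hmeas : Measurable (fun p : Ω × ℝ × ℝ => ℓ p.1 p.2.1 p.2.2))
    (hmono : ∀ ω, StrictMono (fun y => ℓ ω s y))
    (hL₀ : 0 < L₀)
    (hgrowth : ∀ ω, ∀ y, |ℓ ω s y| ≤ L₀ * (1 + |y|)) (hC : 0 < C)
    (hbilip : ∀ ω, ∀ y₁ y₂, C * |y₁ - y₂| ≤ |ℓ ω s y₁ - ℓ ω s y₂|)
    (η : Ω → ℝ) (hm : Measurable η) (hη : Integrable η P) :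
    L₀ * (1 + ∫ ω, |η ω| ∂P) / C ∈ {x : ℝ | 0 ≤ x ∧ 0 ≤ ∫ ω, ℓ ω s (x + η ω) ∂P} := by
  have h0 : 0 ≤ ∫ ω, |η ω| ∂P := integral_nonneg fun ω => abs_nonneg _
  set x := L₀ * (1 + ∫ ω, |η ω| ∂P) / C with hx
  have hx0 : 0 ≤ x := by positivity
  have hCx : C * x = L₀ * (1 + ∫ ω, |η ω| ∂P) := by rw [hx]; field_simp
  refine ⟨hx0, ?_⟩
  have hi0 : Integrable (fun ω => -(L₀ * (1 + |η ω|))) P :=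
    (((integrable_const (1:ℝ)).add hη.abs).const_mul L₀).neg
  have hi : Integrable (fun ω => -(L₀ * (1 + |η ω|)) + C * x) P :=
    hi0.add (integrable_const _)
  have hle : ∫ ω, (-(L₀ * (1 + |η ω|)) + C * x) ∂P ≤ ∫ ω, ℓ ω s (x + η ω) ∂P := by
    refine integral_mono hi (aux_int P ℓ s L₀ hmeas hgrowth _ (hm.const_add x)
      ((integrable_const x).add hη)) fun ω => ?_
    have h1 := aux_incr ℓ s C hmono hbilip ω (η ω) x hx0
    have h2 := (abs_le.1 (hgrowth ω (η ω))).1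
    rw [add_comm (η ω) x] at h1
    simp only
    linarith
  have he : ∫ ω, (-(L₀ * (1 + |η ω|)) + C * x) ∂P = 0 := by
    rw [integral_add hi0 (integrable_const _), integral_neg, integral_const_mul,
      integral_add (integrable_const _) hη.abs]
    simp [hCx]
  linarith

lemma aux_step
    (hmeas : Measurable (fun p : Ω × ℝ × ℝ => ℓ p.1 p.2.1 p.2.2))
    (hmono : ∀ ω, StrictMono (fun y => ℓ ω s y))
    (hL₀ : 0 < L₀)
    (hgrowth : ∀ ω, ∀ y, |ℓ ω s y| ≤ L₀ * (1 + |y|)) (hC : 0 < C) (hκ : 1 < κ)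
    (hbilip : ∀ ω, ∀ y₁ y₂, C * |y₁ - y₂| ≤ |ℓ ω s y₁ - ℓ ω s y₂|)
    (hlip : ∀ ω, ∀ y₁ y₂, |ℓ ω s y₁ - ℓ ω s y₂| ≤ κ * C * |y₁ - y₂|)
    (η ζ : Ω → ℝ) (hm : Measurable η) (hη : Integrable η P)
    (hm' : Measurable ζ) (hζ : Integrable ζ P) :
    LopT P ℓ s η ≤ LopT P ℓ s ζ + κ * ∫ ω, |η ω - ζ ω| ∂P := by
  have h0 : 0 ≤ ∫ ω, |η ω - ζ ω| ∂P := integral_nonneg fun ω => abs_nonneg _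
  rw [← sub_le_iff_le_add]
  refine le_csInf ⟨_, aux_bound P ℓ s L₀ C hmeas hmono hL₀ hgrowth hC hbilip ζ hm' hζ⟩ ?_
  rintro x ⟨hx0, hx⟩
  rw [sub_le_iff_le_add]
  set d := κ * ∫ ω, |η ω - ζ ω| ∂P with hd
  have hd0 : 0 ≤ d := by positivity
  refine csInf_le ⟨0, fun z hz => hz.1⟩ ⟨by positivity, ?_⟩
  have hiζ := aux_int P ℓ s L₀ hmeas hgrowth _ (hm'.const_add x) ((integrable_const x).add hζ)
  have hiη := aux_int P ℓ s L₀ hmeas hgrowth _ (hm.const_add (x + d))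
    ((integrable_const (x + d)).add hη)
  have hab : Integrable (fun ω => κ * C * |η ω - ζ ω|) P := (hη.sub hζ).abs.const_mul _
  have hle : ∫ ω, (ℓ ω s (x + ζ ω) - κ * C * |η ω - ζ ω| + C * d) ∂P
      ≤ ∫ ω, ℓ ω s (x + d + η ω) ∂P := by
    refine integral_mono ((hiζ.sub hab).add (integrable_const _)) hiη fun ω => ?_
    have h1 := aux_incr ℓ s C hmono hbilip ω (x + η ω) d hd0
    have h2 := (abs_le.1 (hlip ω (x + η ω) (x + ζ ω))).1
    rw [show x + η ω + d = x + d + η ω by ring] at h1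
    rw [show x + η ω - (x + ζ ω) = η ω - ζ ω by ring] at h2
    simp only
    linarith
  have he : ∫ ω, (ℓ ω s (x + ζ ω) - κ * C * |η ω - ζ ω| + C * d) ∂P
      = ∫ ω, ℓ ω s (x + ζ ω) ∂P := by
    have hi0 : Integrable (fun ω => ℓ ω s (x + ζ ω) - κ * C * |η ω - ζ ω|) P := hiζ.sub hab
    rw [integral_add hi0 (integrable_const _), integral_sub hiζ hab,
      integral_const_mul]
    simp [hd]
    ring
  linarith

lemma aux_path (T : ℝ) (y : ℝ → Ω → ℝ)
    (hymeas : Measurable (fun q : ℝ × Ω => y q.1 q.2))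
    (hypath : ∀ ω, ContinuousOn (fun t => y t ω) (Set.Icc 0 T))
    (hysup : Integrable (fun ω => ⨆ t : Set.Icc (0 : ℝ) T, |y t ω|) P)
    (hs : s ∈ Set.Icc (0 : ℝ) T) :
    Measurable (y s) ∧ Integrable (y s) P ∧
      ∫ ω, |y s ω| ∂P ≤ ∫ ω, (⨆ t : Set.Icc (0 : ℝ) T, |y t ω|) ∂P := by
  have hm : Measurable (y s) := hymeas.comp (measurable_const.prodMk measurable_id)
  have hle : ∀ ω, |y s ω| ≤ ⨆ t : Set.Icc (0 : ℝ) T, |y t ω| := fun ω => by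
    refine le_ciSup (f := fun t : Set.Icc (0 : ℝ) T => |y t ω|) ?_ ⟨s, hs⟩
    obtain ⟨B, hB⟩ := isCompact_Icc.bddAbove_image (hypath ω).abs
    refine ⟨B, ?_⟩
    rintro _ ⟨t, rfl⟩
    exact hB ⟨t, t.2, rfl⟩
  have hi : Integrable (y s) P := hysup.mono' hm.aestronglyMeasurable (ae_of_all _ hle)
  exact ⟨hm, hi, integral_mono hi.abs hysup hle⟩

lemma aux_sup {ι : Type*} [Nonempty ι] (f g h : ι → ℝ) (κ : ℝ) (hκ : 0 ≤ κ)
    (hg : BddAbove (Set.range g)) (hh : BddAbove (Set.range h))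
    (H : ∀ i, f i ≤ g i + κ * h i) : (⨆ i, f i) - (⨆ i, g i) ≤ κ * ⨆ i, h i := by
  rw [sub_le_iff_le_add']
  exact ciSup_le fun i => (H i).trans
    (add_le_add (le_ciSup hg i) (mul_le_mul_of_nonneg_left (le_ciSup hh i) hκ))

end helpers

/-- For jointly measurable processes `y¹, y²` with continuous sample paths and
integrable running suprema, for every `t ∈ [0,T]`:
`|sup_{s∈[t,T]} L_s(y¹_s) − sup_{s∈[t,T]} L_s(y²_s)| ≤ κ sup_{s∈[t,T]} 𝐄[|y¹_s − y²_s|]`. -/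
theorem stmt6 {Ω : Type*} [MeasurableSpace Ω] (P : Measure Ω) [IsProbabilityMeasure P]
    (T : ℝ) (hT : 0 < T)
    (ℓ : Ω → ℝ → ℝ → ℝ)
    (hmeas : Measurable (fun p : Ω × ℝ × ℝ => ℓ p.1 p.2.1 p.2.2))
    (hcont : ∀ ω, ContinuousOn (fun p : ℝ × ℝ => ℓ ω p.1 p.2) (Set.Icc 0 T ×ˢ Set.univ))
    (hmono : ∀ ω, ∀ t ∈ Set.Icc (0 : ℝ) T, StrictMono (fun y => ℓ ω t y))
    (L₀ : ℝ) (hL₀ : 0 < L₀)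
    (hgrowth : ∀ ω, ∀ t ∈ Set.Icc (0 : ℝ) T, ∀ y, |ℓ ω t y| ≤ L₀ * (1 + |y|))
    (hlim : ∀ t ∈ Set.Icc (0 : ℝ) T, ∃ l : EReal, 0 < l ∧
      Tendsto (fun x : ℝ => ((∫ ω, ℓ ω t x ∂P : ℝ) : EReal)) atTop (𝓝 l))
    (κ C : ℝ) (hκ : 1 < κ) (hC : 0 < C)
    (hbilip : ∀ ω, ∀ t ∈ Set.Icc (0 : ℝ) T, ∀ y₁ y₂,
      C * |y₁ - y₂| ≤ |ℓ ω t y₁ - ℓ ω t y₂| ∧ |ℓ ω t y₁ - ℓ ω t y₂| ≤ κ * C * |y₁ - y₂|)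
    (y₁ y₂ : ℝ → Ω → ℝ)
    (hymeas₁ : Measurable (fun q : ℝ × Ω => y₁ q.1 q.2))
    (hymeas₂ : Measurable (fun q : ℝ × Ω => y₂ q.1 q.2))
    (hypath₁ : ∀ ω, ContinuousOn (fun t => y₁ t ω) (Set.Icc 0 T))
    (hypath₂ : ∀ ω, ContinuousOn (fun t => y₂ t ω) (Set.Icc 0 T))
    (hysup₁ : Integrable (fun ω => ⨆ t : Set.Icc (0 : ℝ) T, |y₁ t ω|) P)
    (hysup₂ : Integrable (fun ω => ⨆ t : Set.Icc (0 : ℝ) T, |y₂ t ω|) P) :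
    ∀ t ∈ Set.Icc (0 : ℝ) T,
      |(⨆ s : Set.Icc t T, LopT P ℓ s (y₁ s)) - ⨆ s : Set.Icc t T, LopT P ℓ s (y₂ s)| ≤
        κ * ⨆ s : Set.Icc t T, ∫ ω, |y₁ (s : ℝ) ω - y₂ (s : ℝ) ω| ∂P := by
  intro t ht
  have hne : Nonempty (Set.Icc t T) := ⟨⟨t, le_refl t, ht.2⟩⟩
  have hmem : ∀ s : Set.Icc t T, (s : ℝ) ∈ Set.Icc (0 : ℝ) T := fun s =>
    ⟨ht.1.trans s.2.1, s.2.2⟩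
  have p₁ := fun s : Set.Icc t T => aux_path P s T y₁ hymeas₁ hypath₁ hysup₁ (hmem s)
  have p₂ := fun s : Set.Icc t T => aux_path P s T y₂ hymeas₂ hypath₂ hysup₂ (hmem s)
  have bdd : ∀ (y : ℝ → Ω → ℝ) (B : ℝ), (∀ s : Set.Icc t T, Measurable (y s) ∧
      Integrable (y s) P ∧ ∫ ω, |y s ω| ∂P ≤ B) →
      BddAbove (Set.range fun s : Set.Icc t T => LopT P ℓ s (y s)) := by
    intro y B p
    refine ⟨L₀ * (1 + B) / C, ?_⟩
    rintro _ ⟨s, rfl⟩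
    refine (csInf_le ⟨0, fun z hz => hz.1⟩ (aux_bound P ℓ s L₀ C hmeas
      (fun ω => hmono ω s (hmem s)) hL₀ (fun ω => hgrowth ω s (hmem s)) hC
      (fun ω a b => (hbilip ω s (hmem s) a b).1) (y s) (p s).1 (p s).2.1)).trans ?_
    have := (p s).2.2
    gcongr
  have bd : BddAbove (Set.range fun s : Set.Icc t T =>
      ∫ ω, |y₁ (s : ℝ) ω - y₂ (s : ℝ) ω| ∂P) := by
    refine ⟨(∫ ω, (⨆ t : Set.Icc (0 : ℝ) T, |y₁ t ω|) ∂P) +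
      ∫ ω, (⨆ t : Set.Icc (0 : ℝ) T, |y₂ t ω|) ∂P, ?_⟩
    rintro _ ⟨s, rfl⟩
    refine le_trans ?_ (add_le_add (p₁ s).2.2 (p₂ s).2.2)
    rw [← integral_add (p₁ s).2.1.abs (p₂ s).2.1.abs]
    exact integral_mono ((p₁ s).2.1.sub (p₂ s).2.1).abs
      ((p₁ s).2.1.abs.add (p₂ s).2.1.abs) fun ω => abs_sub _ _
  have step := fun (s : Set.Icc t T) => aux_step P ℓ s L₀ κ C hmeas
      (fun ω => hmono ω s (hmem s)) hL₀ (fun ω => hgrowth ω s (hmem s)) hC hκ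
      (fun ω a b => (hbilip ω s (hmem s) a b).1) (fun ω a b => (hbilip ω s (hmem s) a b).2)
  have hκ0 : 0 ≤ κ := by linarith
  rw [abs_le']
  constructor
  · exact aux_sup _ _ _ κ hκ0 (bdd y₂ _ p₂) bd
      fun s => step s _ _ (p₁ s).1 (p₁ s).2.1 (p₂ s).1 (p₂ s).2.1
  · rw [neg_sub]
    refine aux_sup _ _ _ κ hκ0 (bdd y₁ _ p₁) bd fun s => ?_
    have := step s _ _ (p₂ s).1 (p₂ s).2.1 (p₁ s).1 (p₁ s).2.1
    simp_rw [abs_sub_comm (y₂ _ _)] at this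
    exact this
end

section
/- Define the reflection map Φ by Φ(y)_t := y_t + sup_{s∈[t,T]} L_s(y_s). Then for every real p ≥ 1 and all jointly measurable processes y¹, y² with continuous sample paths satisfying 𝐄[sup_{t∈[0,T]} |yⁱ_t|^p] < ∞ for i = 1,2, one has 𝐄[sup_{t∈[0,T]} |Φ(y¹)_t − Φ(y²)_t|^p]^{1/p} ≤ (1+κ) 𝐄[sup_{t∈[0,T]} |y¹_t − y²_t|^p]^{1/p}. -/
open MeasureTheory Filter Topology

/-- The reflection map `Φ(y)_t := y_t + sup_{s ∈ [t,T]} L_s(y_s)`. -/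
noncomputable def Phi {Ω : Type*} [MeasurableSpace Ω] (P : Measure Ω)
    (ℓ : Ω → ℝ → ℝ → ℝ) (T : ℝ) (y : ℝ → Ω → ℝ) (t : ℝ) (ω : Ω) : ℝ :=
  y t ω + ⨆ s : Set.Icc t T, LopT P ℓ s (y (s : ℝ))

section aux7

lemma aux7_bdd {T : ℝ} {z : ℝ → ℝ} (hz : ContinuousOn z (Set.Icc 0 T)) :
    BddAbove (Set.range fun t : Set.Icc (0 : ℝ) T => |z t|) := by
  have h := (isCompact_Icc (a := (0 : ℝ)) (b := T)).bddAbove_image hz.abs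
  obtain ⟨M, hM⟩ := h
  refine ⟨M, ?_⟩
  rintro _ ⟨t, rfl⟩
  exact hM ⟨t, t.2, rfl⟩

lemma aux7_meas {Ω : Type*} [MeasurableSpace Ω] {T : ℝ} {z : ℝ → Ω → ℝ}
    (hz : ∀ t, Measurable (z t)) (hc : ∀ ω, ContinuousOn (fun t => z t ω) (Set.Icc 0 T)) :
    Measurable (fun ω => ⨆ t : Set.Icc (0 : ℝ) T, |z t ω|) := by
  obtain ⟨S, hSc, hSd⟩ := TopologicalSpace.exists_countable_dense (Set.Icc (0 : ℝ) T)
  have : Countable S := hSc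
  have e : (fun ω => ⨆ t : Set.Icc (0 : ℝ) T, |z t ω|)
      = fun ω => ⨆ s : S, |z ((s : Set.Icc (0 : ℝ) T) : ℝ) ω| := by
    funext ω
    have hcc : Continuous (fun t : Set.Icc (0 : ℝ) T => |z t ω|) :=
      (continuousOn_iff_continuous_domRestrict.1 (hc ω)).abs
    exact (hSd.ciSup hcc (aux7_bdd (hc ω))).symm
  rw [e]
  exact Measurable.iSup fun s => (hz _).abs

lemma aux7_memLp {Ω : Type*} [MeasurableSpace Ω] {P : Measure Ω} {p : ℝ} (hp : 1 ≤ p)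
    {f : Ω → ℝ} (hf : Measurable f) (h0 : ∀ ω, 0 ≤ f ω)
    (hi : Integrable (fun ω => f ω ^ p) P) : MemLp f (ENNReal.ofReal p) P := by
  have hp0 : 0 < p := by linarith
  rw [← integrable_norm_rpow_iff hf.aestronglyMeasurable (by simpa using hp0) (by simp)]
  rw [ENNReal.toReal_ofReal hp0.le]
  simpa only [Real.norm_eq_abs, abs_of_nonneg (h0 _)] using hi

lemma aux7_mink {Ω : Type*} [MeasurableSpace Ω] {P : Measure Ω} [IsProbabilityMeasure P]
    {p κ : ℝ} (hp : 1 ≤ p) (hκ : 0 ≤ κ)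
    {f g : Ω → ℝ} (hf : MemLp f (ENNReal.ofReal p) P) (h0 : ∀ ω, 0 ≤ f ω) (hg0 : ∀ ω, 0 ≤ g ω)
    (hgf : ∀ ω, g ω ≤ f ω + κ * ∫ ω', f ω' ∂P) :
    (∫ ω, g ω ^ p ∂P) ^ (1 / p) ≤ (1 + κ) * (∫ ω, f ω ^ p ∂P) ^ (1 / p) := by
  have hp0 : 0 < p := by linarith
  have hq1 : 1 ≤ ENNReal.ofReal p := by simpa using hp
  have hq0 : ENNReal.ofReal p ≠ 0 := by simpa using hp0
  have hqt : ENNReal.ofReal p ≠ ⊤ := by simp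
  set c := κ * ∫ ω', f ω' ∂P with hc
  have hI0 : 0 ≤ ∫ ω', f ω' ∂P := integral_nonneg h0
  have hc0 : 0 ≤ c := mul_nonneg hκ hI0
  have key : ∀ h : Ω → ℝ, AEStronglyMeasurable h P → (∀ ω, 0 ≤ h ω) →
      lpNorm h (ENNReal.ofReal p) P = (∫ ω, h ω ^ p ∂P) ^ (1 / p) := by
    intro h hm hh
    rw [lpNorm_eq_integral_norm_rpow_toReal hq0 hqt hm, ENNReal.toReal_ofReal hp0.le]
    simp only [Real.norm_eq_abs, abs_of_nonneg (hh _), one_div]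
  have hcm : MemLp (fun _ : Ω => c) (ENNReal.ofReal p) P := memLp_const c
  have hfc := hf.add hcm
  have hfc0 : ∀ ω, 0 ≤ (f + fun _ : Ω => c : Ω → ℝ) ω := fun ω => add_nonneg (h0 ω) hc0
  have h1 : (∫ ω, g ω ^ p ∂P) ^ (1 / p) ≤ (∫ ω, (f + fun _ : Ω => c : Ω → ℝ) ω ^ p ∂P) ^ (1 / p) := by
    apply Real.rpow_le_rpow (integral_nonneg fun ω => Real.rpow_nonneg (hg0 ω) _) _ (by positivity)
    apply integral_mono_of_nonneg (ae_of_all _ fun ω => Real.rpow_nonneg (hg0 ω) _)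
    · have := hfc.integrable_norm_rpow hq0 hqt
      rw [ENNReal.toReal_ofReal hp0.le] at this
      simpa only [Real.norm_eq_abs, abs_of_nonneg (hfc0 _)] using this
    · exact ae_of_all _ fun ω => Real.rpow_le_rpow (hg0 ω) (hgf ω) hp0.le
  rw [← key _ hfc.1 hfc0] at h1
  rw [← key f hf.1 h0]
  have h2 := lpNorm_add_le hf (g := fun _ => c) hq1
  have h3 : lpNorm (fun _ : Ω => c) (ENNReal.ofReal p) P = c := by
    rw [lpNorm_const' hq0 hqt]; simp [abs_of_nonneg hc0]
  have h4 : ∫ ω', f ω' ∂P ≤ lpNorm f (ENNReal.ofReal p) P := by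
    have a : ∫ ω', f ω' ∂P = lpNorm f 1 P := by
      rw [lpNorm_eq_integral_norm_rpow_toReal one_ne_zero (by simp) hf.1]
      simp [abs_of_nonneg (h0 _)]
    rw [a, ← toReal_eLpNorm hf.1, ← toReal_eLpNorm hf.1]
    exact ENNReal.toReal_mono hf.eLpNorm_ne_top (eLpNorm_le_eLpNorm_of_exponent_le hq1 hf.1)
  have h5 := mul_le_mul_of_nonneg_left h4 hκ
  rw [h3] at h2
  linarith

/-- One-time estimates for the operator `L`. -/
lemma aux7_L {Ω : Type*} [MeasurableSpace Ω] (P : Measure Ω) [IsProbabilityMeasure P]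
    (ℓ : Ω → ℝ → ℝ → ℝ) (t : ℝ)
    (hmeas : Measurable (fun p : Ω × ℝ × ℝ => ℓ p.1 p.2.1 p.2.2))
    (hmono : ∀ ω, StrictMono (fun y => ℓ ω t y))
    (L₀ : ℝ) (hL₀ : 0 < L₀)
    (hgrowth : ∀ ω, ∀ y, |ℓ ω t y| ≤ L₀ * (1 + |y|))
    (κ C : ℝ) (hκ : 1 < κ) (hC : 0 < C)
    (hbilip : ∀ ω, ∀ y₁ y₂,
      C * |y₁ - y₂| ≤ |ℓ ω t y₁ - ℓ ω t y₂| ∧ |ℓ ω t y₁ - ℓ ω t y₂| ≤ κ * C * |y₁ - y₂|)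
    (η θ : Ω → ℝ) (hη : Measurable η) (hθ : Measurable θ)
    (iη : Integrable η P) (iθ : Integrable θ P) :
    LopT P ℓ t η ≤ L₀ * (1 + ∫ ω, |η ω| ∂P) / C ∧
    LopT P ℓ t η ≤ LopT P ℓ t θ + κ * ∫ ω, |η ω - θ ω| ∂P := by
  have hint : ∀ ζ : Ω → ℝ, Measurable ζ → Integrable ζ P → ∀ x : ℝ,
      Integrable (fun ω => ℓ ω t (x + ζ ω)) P := by
    intro ζ hζ iζ x
    have hb : Integrable (fun ω => L₀ * (1 + |x + ζ ω|)) P :=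
      (((integrable_const (1 : ℝ)).add (((integrable_const x).add iζ).abs)).const_mul L₀)
    refine hb.mono' ?_ (ae_of_all _ fun ω => hgrowth ω _)
    have : Measurable (fun ω => (ω, t, x + ζ ω)) := by fun_prop
    exact (hmeas.comp this).aestronglyMeasurable
  have hup : ∀ ζ : Ω → ℝ, Measurable ζ → Integrable ζ P → ∀ x d : ℝ, 0 ≤ d →
      ∫ ω, ℓ ω t (x + ζ ω) ∂P + C * d ≤ ∫ ω, ℓ ω t (x + d + ζ ω) ∂P := by
    intro ζ hζ iζ x d hd
    have e : ∫ ω, ℓ ω t (x + ζ ω) ∂P + C * d = ∫ ω, (ℓ ω t (x + ζ ω) + C * d) ∂P := by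
      rw [integral_add (hint ζ hζ iζ x) (integrable_const _)]; simp
    rw [e]
    refine integral_mono ((hint ζ hζ iζ x).add (integrable_const _)) (hint ζ hζ iζ _) fun ω => ?_
    have h1 := (hbilip ω (x + d + ζ ω) (x + ζ ω)).1
    have h2 : ℓ ω t (x + ζ ω) ≤ ℓ ω t (x + d + ζ ω) := (hmono ω).monotone (by linarith)
    rw [abs_of_nonneg (sub_nonneg.2 h2), show x + d + ζ ω - (x + ζ ω) = d by ring,
      abs_of_nonneg hd] at h1
    show ℓ ω t (x + ζ ω) + C * d ≤ _
    linarith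
  have hmem : ∀ ζ : Ω → ℝ, Measurable ζ → Integrable ζ P →
      L₀ * (1 + ∫ ω, |ζ ω| ∂P) / C ∈ {x : ℝ | 0 ≤ x ∧ 0 ≤ ∫ ω, ℓ ω t (x + ζ ω) ∂P} := by
    intro ζ hζ iζ
    have hI : 0 ≤ ∫ ω, |ζ ω| ∂P := integral_nonneg fun _ => abs_nonneg _
    have h0 : 0 ≤ L₀ * (1 + ∫ ω, |ζ ω| ∂P) / C := by positivity
    refine ⟨h0, ?_⟩
    have h1 := hup ζ hζ iζ 0 _ h0
    rw [mul_div_cancel₀ _ hC.ne', zero_add] at h1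
    have h2 : -(L₀ * (1 + ∫ ω, |ζ ω| ∂P)) ≤ ∫ ω, ℓ ω t (0 + ζ ω) ∂P := by
      have e : -(L₀ * (1 + ∫ ω, |ζ ω| ∂P)) = ∫ ω, -(L₀ * (1 + |ζ ω|)) ∂P := by
        rw [integral_neg, integral_const_mul, integral_add (integrable_const _) iζ.abs]; simp
      rw [e]
      refine integral_mono (((integrable_const (1 : ℝ)).add iζ.abs).const_mul L₀).neg
        (hint ζ hζ iζ 0) fun ω => ?_
      have := (abs_le.1 (hgrowth ω (0 + ζ ω))).1
      simpa using this
    linarith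
  have hbb : ∀ ζ : Ω → ℝ, BddBelow {x : ℝ | 0 ≤ x ∧ 0 ≤ ∫ ω, ℓ ω t (x + ζ ω) ∂P} :=
    fun ζ => ⟨0, fun x hx => hx.1⟩
  refine ⟨csInf_le (hbb η) (hmem η hη iη), ?_⟩
  rw [← sub_le_iff_le_add]
  refine le_csInf ⟨_, hmem θ hθ iθ⟩ ?_
  rintro x ⟨hx0, hx⟩
  rw [sub_le_iff_le_add]
  have hD : 0 ≤ κ * ∫ ω, |η ω - θ ω| ∂P :=
    mul_nonneg (by linarith) (integral_nonneg fun _ => abs_nonneg _)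
  refine csInf_le (hbb η) ⟨by linarith, ?_⟩
  have h1 := hup η hη iη x _ hD
  have h2 : ∫ ω, ℓ ω t (x + θ ω) ∂P - ∫ ω, ℓ ω t (x + η ω) ∂P
      ≤ κ * C * ∫ ω, |η ω - θ ω| ∂P := by
    rw [← integral_sub (hint θ hθ iθ x) (hint η hη iη x), ← integral_const_mul]
    refine integral_mono ((hint θ hθ iθ x).sub (hint η hη iη x))
      ((iη.sub iθ).abs.const_mul _) fun ω => ?_
    have h3 := (hbilip ω (x + θ ω) (x + η ω)).2
    rw [show x + θ ω - (x + η ω) = -(η ω - θ ω) by ring, abs_neg] at h3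
    exact (le_abs_self _).trans h3
  nlinarith [h1, h2, hx]

lemma aux7_sup {ι : Type*} [Nonempty ι] {f g : ι → ℝ} {c : ℝ} (hg : BddAbove (Set.range g))
    (h : ∀ i, f i ≤ g i + c) : ⨆ i, f i ≤ (⨆ i, g i) + c :=
  ciSup_le fun i => (h i).trans (by linarith [le_ciSup hg i])

end aux7

/-- `(1+κ)`-Lipschitz estimate for the reflection map `Φ` in the
`𝐄[sup_{t∈[0,T]} |·|^p]^{1/p}` norm, for every real `p ≥ 1`. -/
theorem stmt7 {Ω : Type*} [MeasurableSpace Ω] (P : Measure Ω) [IsProbabilityMeasure P]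
    (T : ℝ) (hT : 0 < T)
    (ℓ : Ω → ℝ → ℝ → ℝ)
    (hmeas : Measurable (fun p : Ω × ℝ × ℝ => ℓ p.1 p.2.1 p.2.2))
    (hcont : ∀ ω, ContinuousOn (fun p : ℝ × ℝ => ℓ ω p.1 p.2) (Set.Icc 0 T ×ˢ Set.univ))
    (hmono : ∀ ω, ∀ t ∈ Set.Icc (0 : ℝ) T, StrictMono (fun y => ℓ ω t y))
    (L₀ : ℝ) (hL₀ : 0 < L₀)
    (hgrowth : ∀ ω, ∀ t ∈ Set.Icc (0 : ℝ) T, ∀ y, |ℓ ω t y| ≤ L₀ * (1 + |y|))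
    (hlim : ∀ t ∈ Set.Icc (0 : ℝ) T, ∃ l : EReal, 0 < l ∧
      Tendsto (fun x : ℝ => ((∫ ω, ℓ ω t x ∂P : ℝ) : EReal)) atTop (𝓝 l))
    (κ C : ℝ) (hκ : 1 < κ) (hC : 0 < C)
    (hbilip : ∀ ω, ∀ t ∈ Set.Icc (0 : ℝ) T, ∀ y₁ y₂,
      C * |y₁ - y₂| ≤ |ℓ ω t y₁ - ℓ ω t y₂| ∧ |ℓ ω t y₁ - ℓ ω t y₂| ≤ κ * C * |y₁ - y₂|)
    (p : ℝ) (hp : 1 ≤ p)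
    (y₁ y₂ : ℝ → Ω → ℝ)
    (hymeas₁ : Measurable (fun q : ℝ × Ω => y₁ q.1 q.2))
    (hymeas₂ : Measurable (fun q : ℝ × Ω => y₂ q.1 q.2))
    (hypath₁ : ∀ ω, ContinuousOn (fun t => y₁ t ω) (Set.Icc 0 T))
    (hypath₂ : ∀ ω, ContinuousOn (fun t => y₂ t ω) (Set.Icc 0 T))
    (hysup₁ : Integrable (fun ω => (⨆ t : Set.Icc (0 : ℝ) T, |y₁ t ω|) ^ p) P)
    (hysup₂ : Integrable (fun ω => (⨆ t : Set.Icc (0 : ℝ) T, |y₂ t ω|) ^ p) P) :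
    (∫ ω, (⨆ t : Set.Icc (0 : ℝ) T, |Phi P ℓ T y₁ t ω - Phi P ℓ T y₂ t ω|) ^ p ∂P) ^ (1 / p) ≤
      (1 + κ) * (∫ ω, (⨆ t : Set.Icc (0 : ℝ) T, |y₁ t ω - y₂ t ω|) ^ p ∂P) ^ (1 / p) := by
  have hp0 : 0 < p := by linarith
  have hq1 : 1 ≤ ENNReal.ofReal p := by simpa using hp
  have : Nonempty (Set.Icc (0 : ℝ) T) := ⟨⟨0, le_refl _, hT.le⟩⟩
  have m₁ : ∀ t, Measurable (y₁ t) := fun t => hymeas₁.comp (by fun_prop : Measurable fun ω => (t, ω))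
  have m₂ : ∀ t, Measurable (y₂ t) := fun t => hymeas₂.comp (by fun_prop : Measurable fun ω => (t, ω))
  have hpd : ∀ ω, ContinuousOn (fun t => (y₁ t - y₂ t) ω) (Set.Icc 0 T) :=
    fun ω => (hypath₁ ω).sub (hypath₂ ω)
  have b₁ := fun ω => aux7_bdd (hypath₁ ω)
  have b₂ := fun ω => aux7_bdd (hypath₂ ω)
  have bd : ∀ ω, BddAbove (Set.range fun t : Set.Icc (0 : ℝ) T => |y₁ t ω - y₂ t ω|) :=
    fun ω => aux7_bdd (hpd ω)
  have M₁ := aux7_meas m₁ hypath₁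
  have M₂ := aux7_meas m₂ hypath₂
  have Md : Measurable (fun ω => ⨆ t : Set.Icc (0 : ℝ) T, |y₁ t ω - y₂ t ω|) :=
    aux7_meas (z := fun t => y₁ t - y₂ t) (fun t => (m₁ t).sub (m₂ t)) hpd
  have p₁ : MemLp _ (ENNReal.ofReal p) P :=
    aux7_memLp hp M₁ (fun ω => Real.iSup_nonneg fun _ => abs_nonneg _) hysup₁
  have p₂ : MemLp _ (ENNReal.ofReal p) P :=
    aux7_memLp hp M₂ (fun ω => Real.iSup_nonneg fun _ => abs_nonneg _) hysup₂
  have pd : MemLp (fun ω => ⨆ t : Set.Icc (0 : ℝ) T, |y₁ t ω - y₂ t ω|) (ENNReal.ofReal p) P := by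
    refine (p₁.add p₂).mono' Md.aestronglyMeasurable (ae_of_all _ fun ω => ?_)
    rw [Real.norm_eq_abs, abs_of_nonneg (Real.iSup_nonneg fun _ => abs_nonneg _)]
    refine ciSup_le fun t => ?_
    exact (abs_sub _ _).trans (add_le_add (le_ciSup (b₁ ω) t) (le_ciSup (b₂ ω) t))
  have I₁ := p₁.integrable hq1
  have I₂ := p₂.integrable hq1
  have Id := pd.integrable hq1
  have i₁ : ∀ t ∈ Set.Icc (0 : ℝ) T, Integrable (y₁ t) P := fun t ht =>
    I₁.mono' (m₁ t).aestronglyMeasurable (ae_of_all _ fun ω => le_ciSup (b₁ ω) ⟨t, ht⟩)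
  have i₂ : ∀ t ∈ Set.Icc (0 : ℝ) T, Integrable (y₂ t) P := fun t ht =>
    I₂.mono' (m₂ t).aestronglyMeasurable (ae_of_all _ fun ω => le_ciSup (b₂ ω) ⟨t, ht⟩)
  set c := κ * ∫ ω, (⨆ t : Set.Icc (0 : ℝ) T, |y₁ t ω - y₂ t ω|) ∂P with hc
  have hκ0 : 0 ≤ κ := by linarith
  have L12 := fun (t : ℝ) (ht : t ∈ Set.Icc (0 : ℝ) T) =>
    aux7_L P ℓ t hmeas (fun ω => hmono ω t ht) L₀ hL₀ (fun ω => hgrowth ω t ht) κ C hκ hC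
      (fun ω => hbilip ω t ht) (y₁ t) (y₂ t) (m₁ t) (m₂ t) (i₁ t ht) (i₂ t ht)
  have L21 := fun (t : ℝ) (ht : t ∈ Set.Icc (0 : ℝ) T) =>
    aux7_L P ℓ t hmeas (fun ω => hmono ω t ht) L₀ hL₀ (fun ω => hgrowth ω t ht) κ C hκ hC
      (fun ω => hbilip ω t ht) (y₂ t) (y₁ t) (m₂ t) (m₁ t) (i₂ t ht) (i₁ t ht)
  have hDc : ∀ t ∈ Set.Icc (0 : ℝ) T, κ * ∫ ω, |y₁ t ω - y₂ t ω| ∂P ≤ c := fun t ht =>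
    mul_le_mul_of_nonneg_left (integral_mono ((i₁ t ht).sub (i₂ t ht)).abs Id
      fun ω => le_ciSup (bd ω) ⟨t, ht⟩) hκ0
  have B₁ : ∀ t ∈ Set.Icc (0 : ℝ) T,
      BddAbove (Set.range fun s : Set.Icc t T => LopT P ℓ s (y₁ (s : ℝ))) := by
    intro t ht
    refine ⟨L₀ * (1 + ∫ ω, (⨆ t : Set.Icc (0 : ℝ) T, |y₁ t ω|) ∂P) / C, ?_⟩
    rintro _ ⟨s, rfl⟩
    have hs : (s : ℝ) ∈ Set.Icc (0 : ℝ) T := ⟨ht.1.trans s.2.1, s.2.2⟩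
    refine (L12 s hs).1.trans ?_
    have := integral_mono (i₁ s hs).abs I₁ fun ω => le_ciSup (b₁ ω) ⟨s, hs⟩
    gcongr
  have B₂ : ∀ t ∈ Set.Icc (0 : ℝ) T,
      BddAbove (Set.range fun s : Set.Icc t T => LopT P ℓ s (y₂ (s : ℝ))) := by
    intro t ht
    refine ⟨L₀ * (1 + ∫ ω, (⨆ t : Set.Icc (0 : ℝ) T, |y₂ t ω|) ∂P) / C, ?_⟩
    rintro _ ⟨s, rfl⟩
    have hs : (s : ℝ) ∈ Set.Icc (0 : ℝ) T := ⟨ht.1.trans s.2.1, s.2.2⟩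
    refine (L21 s hs).1.trans ?_
    have := integral_mono (i₂ s hs).abs I₂ fun ω => le_ciSup (b₂ ω) ⟨s, hs⟩
    gcongr
  refine aux7_mink hp hκ0 pd (fun ω => Real.iSup_nonneg fun _ => abs_nonneg _)
    (fun ω => Real.iSup_nonneg fun _ => abs_nonneg _) fun ω => ?_
  refine ciSup_le fun t => ?_
  have : Nonempty (Set.Icc (t : ℝ) T) := ⟨⟨T, t.2.2, le_refl _⟩⟩
  have hs : ∀ s : Set.Icc (t : ℝ) T, (s : ℝ) ∈ Set.Icc (0 : ℝ) T :=
    fun s => ⟨t.2.1.trans s.2.1, s.2.2⟩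
  have u₁ : (⨆ s : Set.Icc (t : ℝ) T, LopT P ℓ s (y₁ (s : ℝ))) ≤
      (⨆ s : Set.Icc (t : ℝ) T, LopT P ℓ s (y₂ (s : ℝ))) + c :=
    aux7_sup (B₂ t t.2) fun s => by linarith [(L12 s (hs s)).2, hDc s (hs s)]
  have u₂ : (⨆ s : Set.Icc (t : ℝ) T, LopT P ℓ s (y₂ (s : ℝ))) ≤
      (⨆ s : Set.Icc (t : ℝ) T, LopT P ℓ s (y₁ (s : ℝ))) + c :=
    aux7_sup (B₁ t t.2) fun s => by
      have h := (L21 s (hs s)).2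
      simp only [abs_sub_comm (y₂ _ _)] at h
      linarith [hDc s (hs s)]
  have u₃ := abs_le.1 (le_ciSup (bd ω) t)
  simp only [Phi]
  rw [← hc, abs_le]
  constructor <;> linarith [u₃.1, u₃.2]
end
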